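/- Let c > 0 and a, b, β ∈ ℝ with β > 0. If ω = (x⃗; y⃗) ∈ Ω is a maximum point of F(x⃗;y⃗) = ∑_{i=1}^r (−x_i log x_i − y_i log y_i + (β/2)(a x_i² + b y_i² + 2c x_i y_i)), with x₁ ≥ ⋯ ≥ x_r, then all coordinates x_j and y_j are strictly positive. -/

import Mathlib

/-- The free-energy functional F of the two-block interchange model. -/
noncomputable def Fab (r : ℕ) (a b c β : ℝ) (x y : Fin r → ℝ) : ℝ :=
  ∑ i, (-(x i * Real.log (x i)) - y i * Real.log (y i) +
    β / 2 * (a * x i ^ 2 + b * y i ^ 2 + 2 * c * x i * y i))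

theorem sum_shift (r : ℕ) (G : Fin r → ℝ → ℝ) (x : Fin r → ℝ) (j k : Fin r) (hjk : j ≠ k)
    (u v : ℝ) :
    ∑ i, G i (Function.update (Function.update x j u) k v i) =
      ∑ i, G i (x i) + ((G j u - G j (x j)) + (G k v - G k (x k))) := by
  rw [← sub_eq_iff_eq_add', ← Finset.sum_sub_distrib]
  rw [Fintype.sum_eq_add j k hjk]
  · simp [Function.update_of_ne hjk]
  · rintro i ⟨h1, h2⟩
    simp [Function.update_of_ne h1, Function.update_of_ne h2]

theorem improve (r : ℕ) (a b c β : ℝ) (hβ : 0 < β) (x y : Fin r → ℝ) (hx0 : ∀ i, 0 ≤ x i)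
    (j k : Fin r) (hj : x j = 0) (hk : 0 < x k) :
    ∃ x' : Fin r → ℝ, (∀ i, 0 ≤ x' i) ∧ ∑ i, x' i = ∑ i, x i ∧
      Fab r a b c β x y < Fab r a b c β x' y := by
  have hjk : j ≠ k := by
    rintro rfl
    linarith
  set M : ℝ := β * |a| * x k + |β * c * (y j - y k)| + 1 with hM
  have hM0 : 0 < M := by positivity
  set t : ℝ := x k * Real.exp (-M) with ht
  have ht0 : 0 < t := by positivity
  have htk : t < x k := by
    have : Real.exp (-M) < 1 := by
      simpa using hM0
    nlinarith
  have hlog : Real.log t = Real.log (x k) - M := by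
    rw [ht, Real.log_mul hk.ne' (Real.exp_pos _).ne', Real.log_exp]
    ring
  refine ⟨Function.update (Function.update x j t) k (x k - t), ?_, ?_, ?_⟩
  · intro i
    by_cases h2 : i = k
    · subst h2
      simp [htk.le]
    · by_cases h1 : i = j
      · subst h1
        simp [Function.update_of_ne h2, ht0.le]
      · simp [Function.update_of_ne h1, Function.update_of_ne h2, hx0 i]
  · have := sum_shift r (fun _ z => z) x j k hjk t (x k - t)
    rw [this, hj]
    ring
  · unfold Fab
    have := sum_shift r (fun i z => (-(z * Real.log z) - y i * Real.log (y i) +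
      β / 2 * (a * z ^ 2 + b * y i ^ 2 + 2 * c * z * y i))) x j k hjk t (x k - t)
    rw [this, hj, hlog]
    have h1 : Real.log (x k - t) ≤ Real.log (x k) :=
      Real.log_le_log (by linarith) (by linarith)
    have h2 : (x k - t) * Real.log (x k - t) ≤ (x k - t) * Real.log (x k) :=
      mul_le_mul_of_nonneg_left h1 (by linarith)
    have h3 : -|β * c * (y j - y k)| ≤ β * c * (y j - y k) := neg_abs_le _
    have h4 : β * a * (x k - t) ≤ β * |a| * x k := by
      have e1 : a * (x k - t) ≤ |a| * (x k - t) :=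
        mul_le_mul_of_nonneg_right (le_abs_self a) (by linarith)
      have e2 : |a| * (x k - t) ≤ |a| * x k :=
        mul_le_mul_of_nonneg_left (by linarith) (abs_nonneg a)
      nlinarith
    have h5 : 0 < t * (M - β * a * (x k - t) + β * c * (y j - y k)) :=
      mul_pos ht0 (by linarith)
    simp only [zero_mul]
    nlinarith

theorem Fab_swap (r : ℕ) (a b c β : ℝ) (x y : Fin r → ℝ) :
    Fab r a b c β x y = Fab r b a c β y x := by
  unfold Fab
  exact Finset.sum_congr rfl fun i _ => by ring

theorem maximizer_strictly_positive (r : ℕ) (hr : 2 ≤ r) (ρ a b c β : ℝ)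
    (hρ0 : 0 < ρ) (hρ1 : ρ < 1) (hc : 0 < c) (hβ : 0 < β)
    (x y : Fin r → ℝ) (hx0 : ∀ i, 0 ≤ x i) (hy0 : ∀ i, 0 ≤ y i)
    (hxs : ∑ i, x i = ρ) (hys : ∑ i, y i = 1 - ρ)
    (hxdec : Antitone x)
    (hmax : ∀ x' y' : Fin r → ℝ, (∀ i, 0 ≤ x' i) → (∀ i, 0 ≤ y' i) →
      ∑ i, x' i = ρ → ∑ i, y' i = 1 - ρ → Fab r a b c β x' y' ≤ Fab r a b c β x y) :
    ∀ j, 0 < x j ∧ 0 < y j := by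
  have key : ∀ (z : Fin r → ℝ), (∀ i, 0 ≤ z i) → 0 < ∑ i, z i → ∃ k, 0 < z k := by
    intro z _ hs
    by_contra! h
    exact absurd (Finset.sum_nonpos fun i _ => h i) (not_le.mpr hs)
  intro j
  constructor
  · refine lt_of_le_of_ne (hx0 j) fun hj => ?_
    obtain ⟨k, hk⟩ := key x hx0 (by linarith)
    obtain ⟨x', h0, hs, hlt⟩ := improve r a b c β hβ x y hx0 j k hj.symm hk
    exact absurd (hmax x' y h0 hy0 (hs.trans hxs) hys) (not_le.mpr hlt)
  · refine lt_of_le_of_ne (hy0 j) fun hj => ?_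
    obtain ⟨k, hk⟩ := key y hy0 (by linarith)
    obtain ⟨y', h0, hs, hlt⟩ := improve r b a c β hβ y x hy0 j k hj.symm hk
    rw [Fab_swap r b a c β y x, Fab_swap r b a c β y' x] at hlt
    exact absurd (hmax x y' hx0 h0 hxs (hs.trans hys)) (not_le.mpr hlt)
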